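/- Let E be a finite-dimensional real inner product space, let P ⊆ E be a nonempty finite set, let H(x) = max_{p ∈ P} ‖x − p‖, let c ∈ E be a minimizer of H over E, let r* = H(c), and let R > 0. Then for every x ∈ E with ‖x − c‖ ≤ R, H(x) − r* ≥ ‖x − c‖² / (2 r* + R). -/

import Mathlib

/-!
The squared farthest distance `H²` is a maximum of the functions `‖· - p‖²`, each of which
satisfies the parallelogram-type identity of `norm_sq_segment`; hence `H²` is strongly convex.
At a minimizer `c` this gives the quadratic growth `H x ^ 2 ≥ H c ^ 2 + ‖x - c‖ ^ 2`
(compare `c` with `c + t (x - c)` and let `t → 0`).  Factoring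
`H x ^ 2 - H c ^ 2 = (H x - H c) (H x + H c)` and bounding `H x + H c ≤ 2 H c + R` by the
triangle inequality yields the claim.
-/

theorem norm_sq_segment {E : Type*} [NormedAddCommGroup E] [InnerProductSpace ℝ E]
    (c x p : E) (t : ℝ) :
    ‖c + t • (x - c) - p‖ ^ 2
      = (1 - t) * ‖c - p‖ ^ 2 + t * ‖x - p‖ ^ 2 - t * (1 - t) * ‖x - c‖ ^ 2 := by
  have h1 : c + t • (x - c) - p = (c - p) + t • (x - c) := by abel
  have h2 : x - p = (c - p) + (x - c) := by abel
  rw [h1, h2, norm_add_sq_real, norm_add_sq_real, norm_smul, inner_smul_right, mul_pow,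
    Real.norm_eq_abs, sq_abs]
  ring

/-- Euclidean instance of the key lemma with the explicit constant `τ = 1/(2r* + R)`:
`H(x) − r* ≥ ‖x − c‖²/(2r* + R)` on the ball of radius `R` around the minimax center. -/
theorem stmt_13 {E : Type*} [NormedAddCommGroup E] [InnerProductSpace ℝ E]
    [FiniteDimensional ℝ E]
    (P : Finset E) (hP : P.Nonempty)
    (H : E → ℝ) (hH : ∀ x, H x = P.sup' hP fun p => ‖x - p‖)
    (c : E) (hc : ∀ y, H c ≤ H y) (R : ℝ) (hR : 0 < R) :
    ∀ x : E, ‖x - c‖ ≤ R → H x - H c ≥ ‖x - c‖ ^ 2 / (2 * H c + R) := by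
  intro x hx
  have hle : ∀ y, ∀ p ∈ P, ‖y - p‖ ≤ H y := fun y p hp => by
    rw [hH]; exact Finset.le_sup' (fun p => ‖y - p‖) hp
  have hatt : ∀ y, ∃ p ∈ P, H y = ‖y - p‖ := fun y => by
    rw [hH]; exact Finset.exists_mem_eq_sup' hP _
  have h0 : 0 ≤ H c := by
    obtain ⟨p, -, h⟩ := hatt c
    rw [h]; exact norm_nonneg _
  have hcx := hc x
  have hupper : H x ≤ H c + R := by
    obtain ⟨p, hp, h⟩ := hatt x
    have := norm_sub_le_norm_sub_add_norm_sub x c p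
    have := hle c p hp
    linarith
  have hseg : ∀ t : ℝ, 0 < t → t < 1 →
      (1 - t) * ‖x - c‖ ^ 2 ≤ H x ^ 2 - H c ^ 2 := by
    intro t ht0 ht1
    obtain ⟨p, hp, h⟩ := hatt (c + t • (x - c))
    have h1 : H c ^ 2 ≤ ‖c + t • (x - c) - p‖ ^ 2 := by
      rw [← h]; exact pow_le_pow_left₀ h0 (hc _) 2
    rw [norm_sq_segment] at h1
    have h2 : ‖c - p‖ ^ 2 ≤ H c ^ 2 := pow_le_pow_left₀ (norm_nonneg _) (hle c p hp) 2
    have h3 : ‖x - p‖ ^ 2 ≤ H x ^ 2 := pow_le_pow_left₀ (norm_nonneg _) (hle x p hp) 2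
    have h4 := mul_le_mul_of_nonneg_left h2 (sub_nonneg.2 ht1.le)
    have h5 := mul_le_mul_of_nonneg_left h3 ht0.le
    refine le_of_mul_le_mul_left ?_ ht0
    linarith
  have hgrowth : ‖x - c‖ ^ 2 ≤ H x ^ 2 - H c ^ 2 := by
    by_contra! hlt
    have hA : 0 ≤ H x ^ 2 - H c ^ 2 := sub_nonneg.2 (pow_le_pow_left₀ h0 hcx 2)
    have hd : 0 < ‖x - c‖ ^ 2 := hA.trans_lt hlt
    -- With this `t`, `(1 - t) ‖x - c‖²` is the midpoint of `H x ^ 2 - H c ^ 2` and `‖x - c‖²`.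
    have h := hseg ((‖x - c‖ ^ 2 - (H x ^ 2 - H c ^ 2)) / (2 * ‖x - c‖ ^ 2))
      (div_pos (by linarith) (by linarith)) ((div_lt_one (by linarith)).2 (by linarith))
    have h' : (1 - (‖x - c‖ ^ 2 - (H x ^ 2 - H c ^ 2)) / (2 * ‖x - c‖ ^ 2)) * ‖x - c‖ ^ 2
        = (‖x - c‖ ^ 2 + (H x ^ 2 - H c ^ 2)) / 2 := by
      generalize ‖x - c‖ ^ 2 = d at hd
      field_simp
      ring
    linarith
  rw [ge_iff_le, div_le_iff₀ (by linarith)]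
  have := mul_le_mul_of_nonneg_left (show H x + H c ≤ 2 * H c + R by linarith)
    (sub_nonneg.2 hcx)
  linarith
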